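/- Every nonzero 2-dimensional anti-pre-Lie algebra over ℂ is isomorphic to exactly one of the following algebras, given by a multiplication table on a basis e1, e2 (all unlisted products of basis elements are zero): A01: e1∘e1 = e1, e2∘e2 = e2; A02: e1∘e1 = e1, e1∘e2 = e2, e2∘e1 = e2; A03: e1∘e1 = e1; A04: e1∘e1 = e2; A05: e1∘e1 = −e2, e2∘e1 = −e1; A06^λ (λ ∈ ℂ): e2∘e1 = −e1, e2∘e2 = λ·e2; A07: e2∘e1 = −e1, e2∘e2 = e1 − e2; A08^λ (λ ∈ ℂ, λ ≠ −1): e1∘e2 = (λ+1)·e1, e2∘e1 = λ·e1, e2∘e2 = (λ−1)·e2; A09: e1∘e2 = −e1, e2∘e1 = −2·e1, e2∘e2 = e1 − 3·e2. -/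

import Mathlib

noncomputable section

/-- The 2-dimensional complex vector space. -/
abbrev V2 : Type := Fin 2 → ℂ

/-- The bilinear multiplication on `V2` determined by a table of structure constants:
`c i j` is the product of the `i`-th and `j`-th basis vectors. -/
def tm (c : Fin 2 → Fin 2 → V2) : V2 → V2 → V2 :=
  fun x y => ∑ i, ∑ j, (x i * y j) • c i j

/-- Multiplication table with the given values of `e1*e1`, `e1*e2`, `e2*e1`, `e2*e2`. -/
def tbl (a b c d : V2) : Fin 2 → Fin 2 → V2 := ![![a, b], ![c, d]]

/-- The zero multiplication on `V2`. -/
def zm : V2 → V2 → V2 := fun _ _ => 0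

/-- Isomorphism of algebras with one multiplication: a ℂ-linear bijection preserving
the multiplication. -/
def Iso1 {A : Type*} [AddCommGroup A] [Module ℂ A] {B : Type*} [AddCommGroup B]
    [Module ℂ B] (μ : A → A → A) (ν : B → B → B) : Prop :=
  ∃ φ : A ≃ₗ[ℂ] B, ∀ x y, φ (μ x y) = ν (φ x) (φ y)

/-- Isomorphism of algebras with two multiplications: a ℂ-linear bijection preserving
both multiplications. -/
def Iso2 {A : Type*} [AddCommGroup A] [Module ℂ A] {B : Type*} [AddCommGroup B]
    [Module ℂ B] (μ₁ μ₂ : A → A → A) (ν₁ ν₂ : B → B → B) : Prop :=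
  ∃ φ : A ≃ₗ[ℂ] B,
    (∀ x y, φ (μ₁ x y) = ν₁ (φ x) (φ y)) ∧ (∀ x y, φ (μ₂ x y) = ν₂ (φ x) (φ y))

/-- The commutative associative algebra A01: `e1·e1 = e1`, `e2·e2 = e2`. -/
def cA01 : Fin 2 → Fin 2 → V2 := tbl ![1,0] 0 0 ![0,1]

/-- The commutative associative algebra A02: `e1·e1 = e1`, `e1·e2 = e2·e1 = e2`. -/
def cA02 : Fin 2 → Fin 2 → V2 := tbl ![1,0] ![0,1] ![0,1] 0

/-- The commutative associative algebra A03: `e1·e1 = e1`. -/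
def cA03 : Fin 2 → Fin 2 → V2 := tbl ![1,0] 0 0 0

/-- The commutative associative algebra A04: `e1·e1 = e2`. -/
def cA04 : Fin 2 → Fin 2 → V2 := tbl ![0,1] 0 0 0

/-- Index of the nonzero 2-dimensional anti-pre-Lie algebras A01–A09. -/
inductive APIdx : Type
  | a01 | a02 | a03 | a04 | a05
  | a06 (lam : ℂ)
  | a07
  | a08 (lam : ℂ) (h : lam ≠ -1)
  | a09

/-- The multiplication tables of the nonzero 2-dimensional anti-pre-Lie algebras
A01–A09. -/
def apAlg : APIdx → Fin 2 → Fin 2 → V2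
  | .a01 => tbl ![1,0] 0 0 ![0,1]                        -- e1∘e1=e1, e2∘e2=e2
  | .a02 => tbl ![1,0] ![0,1] ![0,1] 0                   -- e1∘e1=e1, e1∘e2=e2, e2∘e1=e2
  | .a03 => tbl ![1,0] 0 0 0                             -- e1∘e1=e1
  | .a04 => tbl ![0,1] 0 0 0                             -- e1∘e1=e2
  | .a05 => tbl ![0,-1] 0 ![-1,0] 0                      -- e1∘e1=-e2, e2∘e1=-e1
  | .a06 lam => tbl 0 0 ![-1,0] ![0,lam]                 -- e2∘e1=-e1, e2∘e2=λe2
  | .a07 => tbl 0 0 ![-1,0] ![1,-1]                      -- e2∘e1=-e1, e2∘e2=e1-e2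
  | .a08 lam _ => tbl 0 ![lam+1,0] ![lam,0] ![0,lam-1]
  | .a09 => tbl 0 ![-1,0] ![-2,0] ![1,-3]

/-!
A commutative anti-pre-Lie algebra is associative, because `z(xy) - x(zy) = [x, z]y = 0`. A nonzero
one contains either some `x` with `x² ≠ 0 = x³`, which is A04, or an idempotent `e`. If `e` is a
unit, completing the square gives A01 or A02; otherwise the Peirce decomposition supplies an element
annihilated by `e`, which gives A01 or A03.

In the noncommutative case the commutators form a line, spanned by some `u`, and `[u, v] = u` for
some `v`. The first identity then says `[L_v, L_u] = L_u`, so `L_u² = 0` in dimension two. If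
`u² ≠ 0`, then `u, u²` is a basis and the algebra is A05. Otherwise `u` spans an ideal, `uv = bu`,
`vu = (b - 1)u` and `v² = fu + gv`, where the first identity forces `b = 0` or `g = b - 2`. The
substitution `v ↦ v + tu` adds `t(2b - 1 - g)` to `f`, and scaling `u` scales `f`.

For uniqueness, the line of commutators and the class of `v` modulo it are canonical, so `b` and `g`
are invariants, and so is the vanishing of `f` when `g = 2b - 1`. The remaining algebras are
separated by commutativity, squares of commutators, the annihilator, and squares of products.
-/

section Bilinear

variable {K A : Type*} [Field K] [AddCommGroup A] [Module K A]

theorem exists_apply_self_ne_zero [NeZero (2 : K)] {B : Type*} [AddCommGroup B] [Module K B]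
    {μ : A →ₗ[K] A →ₗ[K] B} (hcomm : ∀ x y, μ x y = μ y x) (hμ : μ ≠ 0) : ∃ x, μ x x ≠ 0 := by
  by_contra! halt
  refine hμ (LinearMap.ext₂ fun x y => ?_)
  have hneg : -μ x y = μ y x := LinearMap.IsAlt.neg halt x y
  have htwo : (2 : K) • μ x y = 0 := by
    rw [two_smul]
    nth_rw 1 [hcomm x y, ← hneg, neg_add_cancel]
  exact (smul_eq_zero.1 htwo).resolve_left two_ne_zero

theorem linearIndependent_pair_apply (T : Module.End K A) {x : A} (hx : T x ≠ 0)
    (hx₂ : T (T x) = 0) : LinearIndependent K ![x, T x] := by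
  refine (LinearIndependent.pair_iff' (by rintro rfl; simp at hx)).2 fun a hax => hx ?_
  have ha : a • T x = 0 := by rw [← map_smul, hax, hx₂]
  rw [← hax, (smul_eq_zero.1 ha).resolve_right hx, zero_smul]

theorem exists_eq_smul_add_smul (hdim : Module.finrank K A = 2) {u v : A}
    (huv : LinearIndependent K ![u, v]) (x : A) : ∃ a b : K, x = a • u + b • v := by
  let e := basisOfLinearIndependentOfCardEqFinrank huv (by simp [hdim])
  exact ⟨e.repr x 0, e.repr x 1, by simpa [e] using (e.sum_repr x).symm⟩

theorem matrix_mul_self_eq_zero_of_commutator_eq_self [NeZero (2 : K)]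
    {S T : Matrix (Fin 2) (Fin 2) K} (h : S * T - T * S = T) : T * T = 0 := by
  have htrace : T.trace = 0 := by
    rw [← h, Matrix.trace_sub, Matrix.trace_mul_comm, sub_self]
  have htrace_sq : (T * T).trace = 0 := by
    nth_rw 1 [← h]
    rw [sub_mul, Matrix.trace_sub, Matrix.mul_assoc T, Matrix.trace_mul_comm T, sub_self]
  have hcayley : T * T = (-T.det) • (1 : Matrix (Fin 2) (Fin 2) K) := by
    simpa [Matrix.charpoly_fin_two, htrace, sq, Algebra.algebraMap_eq_smul_one,
      add_eq_zero_iff_eq_neg] using T.aeval_self_charpoly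
  have hdet : T.det = 0 := by simpa [hcayley, two_ne_zero] using htrace_sq
  rw [hcayley, hdet, neg_zero, zero_smul]

theorem mul_self_eq_zero_of_commutator_eq_self [NeZero (2 : K)]
    (hdim : Module.finrank K A = 2) {S T : Module.End K A} (h : S * T - T * S = T) :
    T * T = 0 := by
  have := Module.finite_of_finrank_eq_succ hdim
  let toMatrix := LinearMap.toMatrixAlgEquiv (Module.finBasisOfFinrankEq K A hdim)
  have hmatrix := congrArg toMatrix h
  rw [map_sub, map_mul, map_mul] at hmatrix
  apply toMatrix.injective
  rw [map_mul, map_zero, matrix_mul_self_eq_zero_of_commutator_eq_self hmatrix]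

end Bilinear

section StructureConstants

variable {K A : Type*} [Field K] [AddCommGroup A] [Module K A] {μ : A →ₗ[K] A →ₗ[K] A}

/-- The multiplication `μ` has structure constants `c` in some basis. -/
def HasTable {ι : Type*} [Fintype ι] (μ : A →ₗ[K] A →ₗ[K] A) (c : ι → ι → ι → K) : Prop :=
  ∃ e : Module.Basis ι K A, ∀ i j, μ (e i) (e j) = ∑ k, c i j k • e k

namespace HasTable

theorem finrank_eq {ι : Type*} [Fintype ι] {c : ι → ι → ι → K} (h : HasTable μ c) :
    Module.finrank K A = Fintype.card ι :=
  Module.finrank_eq_card_basis h.choose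

theorem comm_iff {ι : Type*} [Fintype ι] {c : ι → ι → ι → K} (h : HasTable μ c) :
    (∀ x y, μ x y = μ y x) ↔ ∀ i j, c i j = c j i := by
  classical
  obtain ⟨e, he⟩ := h
  have hc : ∀ i j k, e.repr (μ (e i) (e j)) k = c i j k := fun i j k => by
    simp [he, Finsupp.single_apply]
  constructor
  · intro hcomm i j
    ext k
    rw [← hc, ← hc, hcomm]
  · intro hsymm
    have hflip : μ = μ.flip := LinearMap.ext_basis e e fun i j => by
      rw [LinearMap.flip_apply, he, he, hsymm]
    exact fun x y => congrArg (fun ν => ν x y) hflip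

theorem of_pair (hdim : Module.finrank K A = 2) {u v : A} (huv : LinearIndependent K ![u, v])
    {a b c d : Fin 2 → K}
    (huu : μ u u = a 0 • u + a 1 • v) (huv' : μ u v = b 0 • u + b 1 • v)
    (hvu : μ v u = c 0 • u + c 1 • v) (hvv : μ v v = d 0 • u + d 1 • v) :
    HasTable μ ![![a, b], ![c, d]] := by
  refine ⟨basisOfLinearIndependentOfCardEqFinrank huv (by simp [hdim]), fun i j => ?_⟩
  fin_cases i <;> fin_cases j <;> simpa [Fin.sum_univ_two]

theorem exists_pair {a b c d : Fin 2 → K} (h : HasTable μ ![![a, b], ![c, d]]) :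
    ∃ u v, LinearIndependent K ![u, v] ∧
      μ u u = a 0 • u + a 1 • v ∧ μ u v = b 0 • u + b 1 • v ∧
      μ v u = c 0 • u + c 1 • v ∧ μ v v = d 0 • u + d 1 • v := by
  obtain ⟨e, he⟩ := h
  refine ⟨e 0, e 1, ?_, ?_, ?_, ?_, ?_⟩
  · convert e.linearIndependent
    ext i
    fin_cases i <;> rfl
  all_goals simp [he, Fin.sum_univ_two]

end HasTable

end StructureConstants

section Commutative

variable {K A : Type*} [Field K] [AddCommGroup A] [Module K A] {μ : A →ₗ[K] A →ₗ[K] A}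

/-- No nonzero product of two elements has square zero: an isomorphism invariant separating the
commutative algebras A01 and A03 from A02 and A04. -/
def HasReducedProducts (μ : A →ₗ[K] A →ₗ[K] A) : Prop :=
  ∀ x y, μ (μ x y) (μ x y) = 0 → μ x y = 0

theorem hasReducedProducts_of_diagonal (hdim : Module.finrank K A = 2) {u v : A}
    (hli : LinearIndependent K ![u, v]) {p q : K} (huu : μ u u = p • u) (huv : μ u v = 0)
    (hvu : μ v u = 0) (hvv : μ v v = q • v) : HasReducedProducts μ := by
  have hmul : ∀ a b c d : K, μ (a • u + b • v) (c • u + d • v) =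
      (p * (a * c)) • u + (q * (b * d)) • v := fun a b c d => by
    simp only [map_add, map_smul, LinearMap.add_apply, LinearMap.smul_apply, huu, huv, hvu, hvv]
    module
  intro x y hsq
  obtain ⟨a, b, rfl⟩ := exists_eq_smul_add_smul hdim hli x
  obtain ⟨c, d, rfl⟩ := exists_eq_smul_add_smul hdim hli y
  rw [hmul, hmul] at hsq
  obtain ⟨hp, hq⟩ := hli.eq_zero_of_pair hsq
  have hp' : p * (a * c) = 0 := by simpa using hp
  have hq' : q * (b * d) = 0 := by simpa using hq
  rw [hmul, hp', hq', zero_smul, zero_smul, add_zero]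

theorem exists_idempotent_of_self_eq_smul {y : A} {c : K} (hy : y ≠ 0) (hc : c ≠ 0)
    (hyy : μ y y = c • y) : ∃ e ≠ 0, μ e e = e :=
  ⟨c⁻¹ • y, by simp [hy, hc], by simp [hyy, hc]⟩

theorem exists_idempotent_of_cube_ne_zero (hdim : Module.finrank K A = 2)
    (hassoc : ∀ x y z, μ (μ x y) z = μ x (μ y z)) {x : A} (hx : μ x (μ x x) ≠ 0) :
    ∃ e ≠ 0, μ e e = e := by
  have hx₀ : x ≠ 0 := by rintro rfl; simp at hx
  have hxx : μ x x ≠ 0 := fun h => by simp [h] at hx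
  by_cases hli : LinearIndependent K ![x, μ x x]
  · obtain ⟨a, b, hcube⟩ := exists_eq_smul_add_smul hdim hli (μ x (μ x x))
    rcases eq_or_ne a 0 with rfl | ha
    · rw [zero_smul, zero_add] at hcube
      have hb : b ≠ 0 := by rintro rfl; simp [hcube] at hx
      refine exists_idempotent_of_self_eq_smul hxx (mul_ne_zero hb hb) ?_
      rw [hassoc, hcube, map_smul, hcube, smul_smul]
    · -- `z = x² - bx` satisfies `xz = ax`, hence `z² = (x - b)(xz) = az`.
      have hxz : μ x (μ x x - b • x) = a • x := by
        rw [map_sub, map_smul, hcube, add_sub_cancel_right]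
      have hz : μ x x - b • x ≠ 0 := fun h =>
        smul_ne_zero ha hx₀ (by rw [← hxz, h, map_zero])
      have hmul : ∀ y, μ (μ x x - b • x) y = μ x (μ x y) - b • μ x y := fun y => by
        rw [map_sub, map_smul, LinearMap.sub_apply, LinearMap.smul_apply, hassoc]
      refine exists_idempotent_of_self_eq_smul hz ha ?_
      rw [hmul, hxz, map_smul, smul_sub, smul_comm]
  · obtain ⟨c, hc⟩ : ∃ c : K, c • x = μ x x := by
      simpa [LinearIndependent.pair_iff' hx₀] using hli
    exact exists_idempotent_of_self_eq_smul hx₀ (by rintro rfl; simp [← hc] at hxx) hc.symm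

theorem hasTable_of_orthogonal_idempotent (hdim : Module.finrank K A = 2)
    (hcomm : ∀ x y, μ x y = μ y x) (hassoc : ∀ x y z, μ (μ x y) z = μ x (μ y z))
    {e y : A} (he : e ≠ 0) (hee : μ e e = e) (hy : y ≠ 0) (hey : μ e y = 0) :
    HasTable μ ![![![1, 0], 0], ![0, ![0, 1]]] ∨ HasTable μ ![![![1, 0], 0], ![0, 0]] := by
  have hli : ∀ {k : K}, k ≠ 0 → LinearIndependent K ![e, k • y] := fun {k} hk => by
    refine (LinearIndependent.pair_iff' he).2 fun a ha => smul_ne_zero hk hy ?_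
    have hae : a • e = 0 := by rw [← hee, ← map_smul, ha, map_smul, hey, smul_zero]
    rw [← ha, hae]
  have hye : μ y e = 0 := by rw [hcomm, hey]
  obtain ⟨g, h, hyy⟩ := exists_eq_smul_add_smul hdim (hli one_ne_zero) (μ y y)
  have hg : g = 0 := by
    have : g • e = 0 := by
      simpa [hassoc, hey, hee, hyy] using (hassoc e y y).symm
    exact (smul_eq_zero.1 this).resolve_right he
  rw [hg, zero_smul, zero_add, one_smul] at hyy
  rcases eq_or_ne h 0 with rfl | hh
  · exact .inr <| .of_pair hdim (hli one_ne_zero) (by simpa) (by simpa) (by simpa)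
      (by simpa using hyy)
  · refine .inl <| .of_pair hdim (hli (inv_ne_zero hh)) ?_ ?_ ?_ ?_ <;> simp [*]

theorem exists_self_eq_smul_unit [NeZero (2 : K)] (hdim : Module.finrank K A = 2) {e : A}
    (he : e ≠ 0) (hleft : ∀ x, μ e x = x) (hright : ∀ x, μ x e = x) :
    ∃ (y : A) (d : K), LinearIndependent K ![e, y] ∧ μ y y = d • e := by
  obtain ⟨y, hli⟩ := exists_linearIndependent_pair_of_one_lt_finrank (hdim ▸ one_lt_two) he
  obtain ⟨g, h, hyy⟩ := exists_eq_smul_add_smul hdim hli (μ y y)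
  have htwo : (2 : K) ≠ 0 := two_ne_zero
  refine ⟨y - (h / 2) • e, g + (h / 2) * (h / 2), ?_, ?_⟩
  · simpa [sub_eq_add_neg, add_comm] using
      (LinearIndependent.pair_add_smul_add_smul_iff (x := e) (y := y) 1 0 (-(h / 2)) 1).2
        ⟨hli, by simp⟩
  · simp only [map_sub, map_smul, LinearMap.sub_apply, LinearMap.smul_apply, hleft, hright, hyy]
    match_scalars <;> field_simp <;> ring

theorem hasTable_of_unit [IsAlgClosed K] [NeZero (2 : K)] (hdim : Module.finrank K A = 2) {e : A}
    (he : e ≠ 0) (hleft : ∀ x, μ e x = x) (hright : ∀ x, μ x e = x) :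
    HasTable μ ![![![1, 0], 0], ![0, ![0, 1]]] ∨
      HasTable μ ![![![1, 0], ![0, 1]], ![![0, 1], 0]] := by
  obtain ⟨y, d, hli, hyy⟩ := exists_self_eq_smul_unit hdim he hleft hright
  obtain ⟨s, rfl⟩ := IsAlgClosed.exists_eq_mul_self d
  have htwo : (2 : K) ≠ 0 := two_ne_zero
  rcases eq_or_ne s 0 with rfl | hs
  · exact .inr <| .of_pair hdim hli (by simp [hleft]) (by simp [hleft]) (by simp [hright])
      (by simpa using hyy)
  · -- As `(y/s)² = e`, the elements `(e ± y/s)/2` are orthogonal idempotents.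
    have hli' : LinearIndependent K
        ![(1 / 2 : K) • e + (1 / (2 * s)) • y, (1 / 2 : K) • e + (-1 / (2 * s)) • y] :=
      (LinearIndependent.pair_add_smul_add_smul_iff ..).2 ⟨hli, by grind⟩
    refine .inl <| .of_pair hdim hli' ?_ ?_ ?_ ?_ <;>
      simp only [map_add, map_smul, LinearMap.add_apply, LinearMap.smul_apply, hleft, hright, hyy,
        Matrix.cons_val_zero, Matrix.cons_val_one, Pi.zero_apply] <;>
      match_scalars <;> field_simp <;> ring

theorem hasTable_of_comm_of_assoc [IsAlgClosed K] [NeZero (2 : K)]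
    (hdim : Module.finrank K A = 2) (hcomm : ∀ x y, μ x y = μ y x)
    (hassoc : ∀ x y z, μ (μ x y) z = μ x (μ y z)) (hμ : μ ≠ 0) :
    HasTable μ ![![![1, 0], 0], ![0, ![0, 1]]] ∨
      HasTable μ ![![![1, 0], ![0, 1]], ![![0, 1], 0]] ∨
      HasTable μ ![![![1, 0], 0], ![0, 0]] ∨ HasTable μ ![![![0, 1], 0], ![0, 0]] := by
  obtain ⟨x, hxx⟩ := exists_apply_self_ne_zero hcomm hμ
  by_cases hcube : μ x (μ x x) = 0
  · have hsq : μ (μ x x) (μ x x) = 0 := by rw [hassoc, hcube, map_zero]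
    exact .inr <| .inr <| .inr <| .of_pair hdim (linearIndependent_pair_apply (μ x) hxx hcube)
      (by simp) (by simpa using hcube) (by simpa [hcomm _ x] using hcube) (by simpa using hsq)
  · obtain ⟨e, he, hee⟩ := exists_idempotent_of_cube_ne_zero hdim hassoc hcube
    by_cases hunit : ∀ y, μ e y = y
    · exact (hasTable_of_unit hdim he hunit fun y => by rw [hcomm, hunit]).imp_right .inl
    · push Not at hunit
      obtain ⟨y, hy⟩ := hunit
      have hpeirce : μ e (y - μ e y) = 0 := by rw [map_sub, ← hassoc, hee, sub_self]
      exact (hasTable_of_orthogonal_idempotent hdim hcomm hassoc he hee (sub_ne_zero.2 hy.symm)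
        hpeirce).imp_right fun h => .inr (.inl h)

end Commutative

section Noncommutative

variable {K A : Type*} [Field K] [AddCommGroup A] [Module K A] {μ : A →ₗ[K] A →ₗ[K] A}

/-- The table of a multiplication with commutator `[e₁, e₂] = e₁` for which `e₁` spans a
two-sided ideal of square zero: `e₁e₂ = b e₁`, `e₂e₁ = (b - 1) e₁`, `e₂e₂ = f e₁ + g e₂`.
It covers the algebras A06–A09 simultaneously. -/
def affTable (b g f : K) : Fin 2 → Fin 2 → Fin 2 → K :=
  ![![0, ![b, 0]], ![![b - 1, 0], ![f, g]]]

theorem exists_commutator_eq_left (hdim : Module.finrank K A = 2)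
    (hcomm : ¬∀ x y, μ x y = μ y x) : ∃ u v, u ≠ 0 ∧ μ u v - μ v u = u := by
  push Not at hcomm
  obtain ⟨x, y, hxy⟩ := hcomm
  have hx : x ≠ 0 := by rintro rfl; simp at hxy
  have hli : LinearIndependent K ![x, y] :=
    (LinearIndependent.pair_iff' hx).2 (by rintro a rfl; simp at hxy)
  obtain ⟨a, b, hw⟩ := exists_eq_smul_add_smul hdim hli (μ x y - μ y x)
  have hw₀ : a • x + b • y ≠ 0 := hw ▸ sub_ne_zero.2 hxy
  have hleft : μ (a • x + b • y) y - μ y (a • x + b • y) = a • (a • x + b • y) := by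
    simp only [map_add, map_smul, LinearMap.add_apply, LinearMap.smul_apply]
    rw [← hw]
    module
  have hright : μ (a • x + b • y) x - μ x (a • x + b • y) = (-b) • (a • x + b • y) := by
    simp only [map_add, map_smul, LinearMap.add_apply, LinearMap.smul_apply]
    rw [← hw]
    module
  rcases eq_or_ne a 0 with ha | ha
  · have hb : -b ≠ 0 := fun hb => by simp [ha, neg_eq_zero.1 hb] at hw₀
    refine ⟨_, (-b)⁻¹ • x, hw₀, ?_⟩
    rw [map_smul, map_smul, LinearMap.smul_apply, ← smul_sub, hright, inv_smul_smul₀ hb]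
  · refine ⟨_, a⁻¹ • y, hw₀, ?_⟩
    rw [map_smul, map_smul, LinearMap.smul_apply, ← smul_sub, hleft, inv_smul_smul₀ ha]

theorem mul_left_mul_left_eq_zero [NeZero (2 : K)] (hdim : Module.finrank K A = 2)
    (hap : ∀ x y z, μ x (μ y z) - μ y (μ x z) = μ (μ y x - μ x y) z)
    {u v : A} (huv : μ u v - μ v u = u) (x : A) : μ u (μ u x) = 0 := by
  have hlie : (μ v : Module.End K A) * μ u - μ u * μ v = μ u := by
    ext z
    simpa [huv] using hap v u z
  exact congrArg (fun T : Module.End K A => T x) (mul_self_eq_zero_of_commutator_eq_self hdim hlie)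

theorem hasTable_of_mul_self_ne_zero [IsAlgClosed K] [NeZero (2 : K)]
    (hdim : Module.finrank K A = 2)
    (hap : ∀ x y z, μ x (μ y z) - μ y (μ x z) = μ (μ y x - μ x y) z)
    {u v : A} (huv : μ u v - μ v u = u) (huu : μ u u ≠ 0) :
    HasTable μ ![![![0, -1], 0], ![![-1, 0], 0]] := by
  have hsq := mul_left_mul_left_eq_zero hdim hap huv
  have hli : LinearIndependent K ![u, μ u u] := linearIndependent_pair_apply (μ u) huu (hsq u)
  have hu : u ≠ 0 := by rintro rfl; simp at huu
  obtain ⟨a, c, hv⟩ := exists_eq_smul_add_smul hdim hli v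
  have hwu : -(c • μ (μ u u) u) = u := by
    simpa [hv, hsq] using huv
  have hc : c ≠ 0 := by rintro rfl; simp [hu.symm] at hwu
  have hwu' : μ (μ u u) u = (-c⁻¹) • u := by
    nth_rw 4 [← hwu]
    simp [hc]
  have hww : μ (μ u u) (μ u u) = 0 := by
    simpa [hwu', hsq] using hap u (μ u u) u
  obtain ⟨k, hk⟩ := IsAlgClosed.exists_eq_mul_self (-c)
  have hk₀ : k ≠ 0 := by rintro rfl; simp [hc] at hk
  have hli' : LinearIndependent K ![k • u, c • μ u u] := by
    simpa using (LinearIndependent.pair_add_smul_add_smul_iff (x := u) (y := μ u u) k 0 0 c).2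
      ⟨hli, by simp [hk₀, hc]⟩
  refine .of_pair hdim hli' ?_ ?_ ?_ ?_
  · simp [smul_smul, ← hk]
  · simp [hsq]
  · simp [hwu', smul_smul, hc]
  · simp [hww]

theorem hasTable_affTable_of_mul_self_eq_zero [NeZero (2 : K)] (hdim : Module.finrank K A = 2)
    (hap : ∀ x y z, μ x (μ y z) - μ y (μ x z) = μ (μ y x - μ x y) z)
    {u v : A} (hu : u ≠ 0) (huv : μ u v - μ v u = u) (huu : μ u u = 0) :
    ∃ b g f, (b = 0 ∨ g = b - 2) ∧ HasTable μ (affTable b g f) := by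
  have hli : LinearIndependent K ![u, v] :=
    (LinearIndependent.pair_iff' hu).2 (by rintro a rfl; exact hu (by simpa [huu] using huv.symm))
  obtain ⟨b, d, hb⟩ := exists_eq_smul_add_smul hdim hli (μ u v)
  have hb' : μ u v = b • u := by
    have hd : d • μ u v = 0 := by
      simpa [hb, huu] using mul_left_mul_left_eq_zero hdim hap huv v
    rcases smul_eq_zero.1 hd with rfl | h
    · simpa using hb
    · obtain ⟨rfl, -⟩ := hli.eq_zero_of_pair (hb.symm.trans h)
      simpa using h
  have hvu : μ v u = (b - 1) • u := by
    rw [sub_smul, one_smul, ← hb', sub_eq_iff_eq_add.1 huv]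
    abel
  obtain ⟨f, g, hvv⟩ := exists_eq_smul_add_smul hdim hli (μ v v)
  have hrel : b * (g - b + 2) = 0 := by
    have h : (b * (g - b + 2)) • u = 0 := by
      have h := hap u v v
      rw [← neg_sub (μ u v) (μ v u), huv] at h
      simp only [hb', hvv, hvu, huu, map_add, map_smul, map_neg, LinearMap.neg_apply] at h
      linear_combination (norm := module) h
    exact (smul_eq_zero.1 h).resolve_right hu
  refine ⟨b, g, f, ?_, .of_pair hdim hli (by simpa) (by simpa) (by simpa) (by simpa)⟩
  rcases mul_eq_zero.1 hrel with h | h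
  · exact .inl h
  · exact .inr (by linear_combination h)

theorem HasTable.exists_normalized_affTable {b g f : K} (h : HasTable μ (affTable b g f)) :
    ∃ f', (f' = 0 ∨ f' = 1 ∧ g = 2 * b - 1) ∧ HasTable μ (affTable b g f') := by
  have hdim := h.finrank_eq
  obtain ⟨u, v, hli, huu, huv, hvu, hvv⟩ := h.exists_pair
  have hli' : ∀ {k : K} (t : K), k ≠ 0 → LinearIndependent K ![k • u, t • u + v] :=
    fun {k} t hk => by
      simpa using (LinearIndependent.pair_add_smul_add_smul_iff (x := u) (y := v) k 0 t 1).2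
        ⟨hli, by simpa using hk⟩
  simp only [Pi.zero_apply, Matrix.cons_val_zero, Matrix.cons_val_one, zero_smul, add_zero]
    at huu huv hvu hvv
  by_cases hg : g = 2 * b - 1
  · rcases eq_or_ne f 0 with rfl | hf
    · exact ⟨0, .inl rfl, h⟩
    · refine ⟨1, .inr ⟨rfl, hg⟩, .of_pair hdim (hli' 0 hf) ?_ ?_ ?_ ?_⟩ <;>
        simp [huu, huv, hvu, hvv, smul_comm f]
  · -- Replacing `v` by `v + tu` adds `t (2b - 1 - g)` to `f`.
    have hg' : g - (2 * b - 1) ≠ 0 := sub_ne_zero.2 hg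
    refine ⟨0, .inl rfl, .of_pair hdim (hli' (f / (g - (2 * b - 1))) one_ne_zero) ?_ ?_ ?_ ?_⟩ <;>
      simp only [map_add, map_smul, LinearMap.add_apply, LinearMap.smul_apply, huu, huv, hvu, hvv,
        Pi.zero_apply, Matrix.cons_val_zero, Matrix.cons_val_one] <;>
      match_scalars <;> field_simp <;> ring

theorem HasTable.not_comm_of_affTable {b g f : K} (h : HasTable μ (affTable b g f)) :
    ¬∀ x y, μ x y = μ y x := by
  rw [h.comm_iff]
  intro hsymm
  have hb : b = b - 1 := by simpa [affTable] using congrFun (hsymm 0 1) 0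
  exact one_ne_zero (sub_eq_self.1 hb.symm)

theorem commutator_eq_smul_of_pair {u v : A} (huv : μ u v - μ v u = u) (a b c d : K) :
    μ (a • u + b • v) (c • u + d • v) - μ (c • u + d • v) (a • u + b • v) =
      (a * d - b * c) • u := by
  nth_rw 5 [← huv]
  simp only [map_add, map_smul, LinearMap.add_apply, LinearMap.smul_apply]
  module

theorem HasTable.commutator_mul_self_eq_zero {b g f : K} (h : HasTable μ (affTable b g f))
    (x y : A) : μ (μ x y - μ y x) (μ x y - μ y x) = 0 := by
  obtain ⟨u, v, hli, huu, huv, hvu, -⟩ := h.exists_pair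
  have hcomm : μ u v - μ v u = u := by simp [huv, hvu, sub_smul]
  obtain ⟨x₀, x₁, rfl⟩ := exists_eq_smul_add_smul h.finrank_eq hli x
  obtain ⟨y₀, y₁, rfl⟩ := exists_eq_smul_add_smul h.finrank_eq hli y
  rw [commutator_eq_smul_of_pair hcomm]
  simp [huu]

theorem HasTable.affTable_params_eq {b g f b' g' f' : K} (h : HasTable μ (affTable b g f))
    (h' : HasTable μ (affTable b' g' f')) :
    b = b' ∧ g = g' ∧ (g = 2 * b - 1 → (f = 0 ↔ f' = 0)) := by
  obtain ⟨u, v, hli, huu, huv, hvu, hvv⟩ := h.exists_pair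
  obtain ⟨u', v', hli', -, huv', hvu', hvv'⟩ := h'.exists_pair
  have hcomm : μ u v - μ v u = u := by simp [huv, hvu, sub_smul]
  have hcomm' : μ u' v' - μ v' u' = u' := by simp [huv', hvu', sub_smul]
  obtain ⟨p, q, rfl⟩ := exists_eq_smul_add_smul h.finrank_eq hli u'
  obtain ⟨r, s, rfl⟩ := exists_eq_smul_add_smul h.finrank_eq hli v'
  rw [commutator_eq_smul_of_pair hcomm] at hcomm'
  obtain ⟨hps, hq⟩ := hli.eq_zero_of_pair (s := p * s - q * r - p) (t := -q)
    (by linear_combination (norm := module) hcomm')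
  obtain rfl : q = 0 := neg_eq_zero.1 hq
  have hp : p ≠ 0 := by rintro rfl; simpa using hli'.ne_zero 0
  obtain rfl : s = 1 := by grind
  simp only [map_add, map_smul, LinearMap.add_apply, LinearMap.smul_apply, huu, huv, hvu, hvv,
    Pi.zero_apply, Matrix.cons_val_zero, Matrix.cons_val_one] at huv' hvv'
  obtain ⟨hb, -⟩ := hli.eq_zero_of_pair (s := p * (b - b')) (t := 0)
    (by linear_combination (norm := module) huv')
  obtain ⟨hf, hg⟩ := hli.eq_zero_of_pair (s := f + r * (2 * b - 1 - g') - p * f') (t := g - g')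
    (by linear_combination (norm := module) hvv')
  obtain rfl : b = b' := sub_eq_zero.1 ((mul_eq_zero.1 hb).resolve_left hp)
  obtain rfl : g = g' := sub_eq_zero.1 hg
  refine ⟨rfl, rfl, fun hgb => ?_⟩
  have hff' : f = p * f' := by linear_combination hf + r * hgb
  simp [hff', hp]

end Noncommutative

section Tables

theorem affTable_inj {K : Type*} [Field K] {b g f b' g' f' : K} :
    affTable b g f = affTable b' g' f' ↔ b = b' ∧ g = g' ∧ f = f' := by
  refine ⟨fun h => ⟨?_, ?_, ?_⟩, by rintro ⟨rfl, rfl, rfl⟩; rfl⟩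
  exacts [congrFun (congrFun₂ h 0 1) 0, congrFun (congrFun₂ h 1 1) 1,
    congrFun (congrFun₂ h 1 1) 0]

theorem apAlg_a06 (l : ℂ) : apAlg (.a06 l) = affTable 0 l 0 := by
  ext i j k
  fin_cases i <;> fin_cases j <;> fin_cases k <;> simp [apAlg, tbl, affTable]

theorem apAlg_a07 : apAlg .a07 = affTable 0 (-1) 1 := by
  ext i j k
  fin_cases i <;> fin_cases j <;> fin_cases k <;> simp [apAlg, tbl, affTable]

theorem apAlg_a08 (l : ℂ) (h : l ≠ -1) : apAlg (.a08 l h) = affTable (l + 1) (l - 1) 0 := by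
  simp [apAlg, tbl, affTable]

theorem apAlg_a09 : apAlg .a09 = affTable (-1) (-3) 1 := by
  norm_num [apAlg, tbl, affTable]

theorem exists_apAlg_eq_affTable_iff {b g f : ℂ} :
    (∃ i, apAlg i = affTable b g f) ↔
      (b = 0 ∨ g = b - 2) ∧ (f = 0 ∨ f = 1 ∧ g = 2 * b - 1) := by
  constructor
  · rintro ⟨i, hi⟩
    cases i with
    | a06 l =>
      obtain ⟨rfl, rfl, rfl⟩ := affTable_inj.1 ((apAlg_a06 l).symm.trans hi)
      simp
    | a07 =>
      obtain ⟨rfl, rfl, rfl⟩ := affTable_inj.1 (apAlg_a07.symm.trans hi)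
      simp
    | a08 l h =>
      obtain ⟨rfl, rfl, rfl⟩ := affTable_inj.1 ((apAlg_a08 l h).symm.trans hi)
      exact ⟨.inr (by ring), .inl rfl⟩
    | a09 =>
      obtain ⟨rfl, rfl, rfl⟩ := affTable_inj.1 (apAlg_a09.symm.trans hi)
      norm_num
    | _ => simpa [apAlg, tbl, affTable] using congrFun₂ hi 0 0
  · rintro ⟨rfl | rfl, rfl | ⟨rfl, hg⟩⟩
    · exact ⟨.a06 g, apAlg_a06 g⟩
    · exact ⟨.a07, by rw [apAlg_a07, hg, mul_zero, zero_sub]⟩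
    · rcases eq_or_ne b 0 with rfl | hb
      · exact ⟨.a06 (0 - 2), apAlg_a06 _⟩
      · exact ⟨.a08 (b - 1) (by grind), by rw [apAlg_a08]; congr 1 <;> ring⟩
    · obtain rfl : b = -1 := by linear_combination -hg
      exact ⟨.a09, by rw [apAlg_a09]; congr 1; norm_num⟩

theorem eq_or_exists_affTable (i : APIdx) :
    (i = .a01 ∨ i = .a02 ∨ i = .a03 ∨ i = .a04) ∨ i = .a05 ∨
      ∃ b g f, apAlg i = affTable b g f := by
  cases i with
  | a06 l => exact .inr <| .inr ⟨_, _, _, apAlg_a06 l⟩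
  | a07 => exact .inr <| .inr ⟨_, _, _, apAlg_a07⟩
  | a08 l h => exact .inr <| .inr ⟨_, _, _, apAlg_a08 l h⟩
  | a09 => exact .inr <| .inr ⟨_, _, _, apAlg_a09⟩
  | _ => simp

theorem apAlg_injective : Function.Injective apAlg := by
  intro i j h
  simp only [funext_iff, Fin.forall_fin_two] at h
  cases i <;> cases j <;> simp [apAlg, tbl] at h ⊢ <;> grind

end Tables

section Uniqueness

variable {A : Type*} [AddCommGroup A] [Module ℂ A] {μ : A →ₗ[ℂ] A →ₗ[ℂ] A} {i j : APIdx}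

theorem comm_iff_of_hasTable_apAlg (h : HasTable μ (apAlg i)) :
    (∀ x y, μ x y = μ y x) ↔ i = .a01 ∨ i = .a02 ∨ i = .a03 ∨ i = .a04 := by
  rcases eq_or_exists_affTable i with hi | rfl | ⟨b, g, f, hi⟩
  · rw [h.comm_iff]
    rcases hi with rfl | rfl | rfl | rfl <;> simp [apAlg, tbl, Fin.forall_fin_two]
  · rw [h.comm_iff]
    simp [apAlg, tbl, Fin.forall_fin_two]
  · refine iff_of_false (hi ▸ h).not_comm_of_affTable ?_
    have hi₀ : apAlg i 0 0 = 0 := congrFun₂ hi 0 0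
    rintro (rfl | rfl | rfl | rfl) <;> simp [apAlg, tbl] at hi₀

theorem commutator_mul_self_eq_zero_iff_of_hasTable_apAlg (h : HasTable μ (apAlg i)) :
    (∀ x y, μ (μ x y - μ y x) (μ x y - μ y x) = 0) ↔ i ≠ .a05 := by
  rcases eq_or_exists_affTable i with hi | rfl | ⟨b, g, f, hi⟩
  · refine iff_of_true (fun x y => ?_) (by rintro rfl; simp at hi)
    rw [(comm_iff_of_hasTable_apAlg h).2 hi x y, sub_self, map_zero]
  · obtain ⟨u, v, hli, huu, huv, hvu, -⟩ := h.exists_pair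
    simp only [ne_eq, not_true_eq_false, iff_false, not_forall]
    refine ⟨u, v, ?_⟩
    simpa [huu, huv, hvu] using hli.ne_zero 1
  · refine iff_of_true (HasTable.commutator_mul_self_eq_zero (hi ▸ h)) ?_
    have hi₀ : apAlg i 0 0 = 0 := congrFun₂ hi 0 0
    rintro rfl
    simp [apAlg, tbl] at hi₀

theorem injective_iff_of_hasTable_apAlg (h : HasTable μ (apAlg i))
    (hi : i = .a01 ∨ i = .a02 ∨ i = .a03 ∨ i = .a04) :
    Function.Injective μ ↔ i = .a01 ∨ i = .a02 := by
  rw [injective_iff_map_eq_zero]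
  rcases hi with rfl | rfl | rfl | rfl <;>
    obtain ⟨u, v, hli, huu, huv, hvu, hvv⟩ := h.exists_pair <;>
    simp only [Pi.zero_apply, Matrix.cons_val_zero, Matrix.cons_val_one, zero_smul, one_smul,
      add_zero, zero_add] at huu huv hvu hvv
  · refine iff_of_true (fun x hx => ?_) (by simp)
    obtain ⟨a, b, rfl⟩ := exists_eq_smul_add_smul h.finrank_eq hli x
    have hu : a • u = 0 := by simpa [huu, hvu] using congrArg (fun T => T u) hx
    have hv : b • v = 0 := by simpa [huv, hvv] using congrArg (fun T => T v) hx
    rw [hu, hv, add_zero]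
  · refine iff_of_true (fun x hx => ?_) (by simp)
    obtain ⟨a, b, rfl⟩ := exists_eq_smul_add_smul h.finrank_eq hli x
    simpa [huu, hvu] using congrArg (fun T => T u) hx
  all_goals
    have hv : μ v = 0 := LinearMap.ext fun x => by
      obtain ⟨a, b, rfl⟩ := exists_eq_smul_add_smul h.finrank_eq hli x
      simp [hvu, hvv]
    exact iff_of_false (fun hinj => hli.ne_zero 1 (hinj v hv)) (by simp)

theorem hasReducedProducts_iff_of_hasTable_apAlg (h : HasTable μ (apAlg i))
    (hi : i = .a01 ∨ i = .a02 ∨ i = .a03 ∨ i = .a04) :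
    HasReducedProducts μ ↔ i = .a01 ∨ i = .a03 := by
  rcases hi with rfl | rfl | rfl | rfl <;>
    obtain ⟨u, v, hli, huu, huv, hvu, hvv⟩ := h.exists_pair <;>
    simp only [Pi.zero_apply, Matrix.cons_val_zero, Matrix.cons_val_one, zero_smul, one_smul,
      add_zero, zero_add] at huu huv hvu hvv
  · exact iff_of_true (hasReducedProducts_of_diagonal h.finrank_eq hli (p := 1) (q := 1)
      (by simpa) huv hvu (by simpa)) (by simp)
  · refine iff_of_false (fun hred => hli.ne_zero 1 ?_) (by simp)
    simpa [huv] using hred u v (by rw [huv, hvv])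
  · exact iff_of_true (hasReducedProducts_of_diagonal h.finrank_eq hli (p := 1) (q := 0)
      (by simpa) huv hvu (by simpa)) (by simp)
  · refine iff_of_false (fun hred => hli.ne_zero 1 ?_) (by simp)
    simpa [huu] using hred u u (by rw [huu, hvv])

theorem apAlg_eq_of_affTable {b g f b' g' f' : ℂ} (hi : apAlg i = affTable b g f)
    (hj : apAlg j = affTable b' g' f') (h : HasTable μ (affTable b g f))
    (h' : HasTable μ (affTable b' g' f')) : i = j := by
  obtain ⟨rfl, rfl, hff'⟩ := h.affTable_params_eq h'
  have hf := (exists_apAlg_eq_affTable_iff.1 ⟨i, hi⟩).2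
  have hf' := (exists_apAlg_eq_affTable_iff.1 ⟨j, hj⟩).2
  obtain rfl : f = f' := by grind
  exact apAlg_injective (hi.trans hj.symm)

theorem eq_of_hasTable_apAlg_of_comm (hcomm : ∀ x y, μ x y = μ y x) (hi : HasTable μ (apAlg i))
    (hj : HasTable μ (apAlg j)) : i = j := by
  have hi' := (comm_iff_of_hasTable_apAlg hi).1 hcomm
  have hj' := (comm_iff_of_hasTable_apAlg hj).1 hcomm
  have hinj := (injective_iff_of_hasTable_apAlg hi hi').symm.trans
    (injective_iff_of_hasTable_apAlg hj hj')
  have hred := (hasReducedProducts_iff_of_hasTable_apAlg hi hi').symm.trans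
    (hasReducedProducts_iff_of_hasTable_apAlg hj hj')
  rcases hi' with rfl | rfl | rfl | rfl <;> rcases hj' with rfl | rfl | rfl | rfl <;>
    simp at hinj hred ⊢

theorem eq_of_hasTable_apAlg (hi : HasTable μ (apAlg i)) (hj : HasTable μ (apAlg j)) : i = j := by
  by_cases hcomm : ∀ x y, μ x y = μ y x
  · exact eq_of_hasTable_apAlg_of_comm hcomm hi hj
  have hi' := mt (comm_iff_of_hasTable_apAlg hi).2 hcomm
  have hj' := mt (comm_iff_of_hasTable_apAlg hj).2 hcomm
  have ha05 : i = .a05 ↔ j = .a05 := not_iff_not.1 <|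
    (commutator_mul_self_eq_zero_iff_of_hasTable_apAlg hi).symm.trans
      (commutator_mul_self_eq_zero_iff_of_hasTable_apAlg hj)
  by_cases hi₅ : i = .a05
  · rw [hi₅, ha05.1 hi₅]
  · obtain ⟨b, g, f, h⟩ := ((eq_or_exists_affTable i).resolve_left hi').resolve_left hi₅
    obtain ⟨b', g', f', h'⟩ :=
      ((eq_or_exists_affTable j).resolve_left hj').resolve_left (mt ha05.2 hi₅)
    exact apAlg_eq_of_affTable h h' (h ▸ hi) (h' ▸ hj)

end Uniqueness

section Classification

variable {A : Type*} [AddCommGroup A] [Module ℂ A] {μ : A →ₗ[ℂ] A →ₗ[ℂ] A}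

/-- The multiplication `tm c` as a bilinear map. -/
def tmLin (c : Fin 2 → Fin 2 → V2) : V2 →ₗ[ℂ] V2 →ₗ[ℂ] V2 :=
  LinearMap.mk₂ ℂ (tm c)
    (fun x x' y => by simp [tm, add_mul, add_smul, Finset.sum_add_distrib])
    (fun a x y => by simp [tm, mul_assoc, mul_smul])
    (fun x y y' => by simp [tm, mul_add, add_smul, Finset.sum_add_distrib])
    (fun a x y => by simp [tm, mul_left_comm, mul_smul])

theorem tm_single (c : Fin 2 → Fin 2 → V2) (i j : Fin 2) :
    tm c (Pi.single i 1) (Pi.single j 1) = c i j := by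
  fin_cases i <;> fin_cases j <;> simp [tm]

theorem iso1_tm_iff_hasTable {c : Fin 2 → Fin 2 → V2} :
    Iso1 (fun x y => μ x y) (tm c) ↔ HasTable μ c := by
  constructor
  · rintro ⟨φ, hφ⟩
    refine ⟨Module.Basis.ofEquivFun φ, fun i j => φ.injective ?_⟩
    simpa [hφ, tm_single] using pi_eq_sum_univ' (c i j)
  · rintro ⟨e, he⟩
    refine ⟨e.equivFun, fun x y => ?_⟩
    have h : μ.compr₂ e.equivFun.toLinearMap =
        (tmLin c).compl₁₂ e.equivFun.toLinearMap e.equivFun.toLinearMap :=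
      LinearMap.ext_basis e e fun i j => by
        simpa [he, tmLin, Finsupp.single_eq_pi_single, tm_single, ← Pi.single_smul] using
          (pi_eq_sum_univ' (c i j)).symm
    exact congrArg (fun ν => ν x y) h

theorem hasTable_tmLin (c : Fin 2 → Fin 2 → V2) : HasTable (tmLin c) c :=
  iso1_tm_iff_hasTable.1 ⟨.refl ℂ V2, fun _ _ => rfl⟩

theorem exists_hasTable_apAlg (hdim : Module.finrank ℂ A = 2)
    (hap : ∀ x y z, μ x (μ y z) - μ y (μ x z) = μ (μ y x - μ x y) z) (hμ : μ ≠ 0) :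
    ∃ i, HasTable μ (apAlg i) := by
  by_cases hcomm : ∀ x y, μ x y = μ y x
  · have hassoc : ∀ x y z, μ (μ x y) z = μ x (μ y z) := fun x y z => by
      rw [hcomm _ z, hcomm y z, ← sub_eq_zero, hap, hcomm x z, sub_self, map_zero,
        LinearMap.zero_apply]
    rcases hasTable_of_comm_of_assoc hdim hcomm hassoc hμ with h | h | h | h
    exacts [⟨.a01, h⟩, ⟨.a02, h⟩, ⟨.a03, h⟩, ⟨.a04, h⟩]
  · obtain ⟨u, v, hu, huv⟩ := exists_commutator_eq_left hdim hcomm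
    by_cases huu : μ u u = 0
    · obtain ⟨b, g, f, hbg, h⟩ := hasTable_affTable_of_mul_self_eq_zero hdim hap hu huv huu
      obtain ⟨f', hf', h'⟩ := h.exists_normalized_affTable
      obtain ⟨i, hi⟩ := exists_apAlg_eq_affTable_iff.2 ⟨hbg, hf'⟩
      exact ⟨i, hi ▸ h'⟩
    · exact ⟨.a05, hasTable_of_mul_self_ne_zero hdim hap huv huu⟩

end Classification

/-- Every nonzero 2-dimensional anti-pre-Lie algebra over ℂ is
isomorphic to exactly one of A01–A09 (with A08^λ only for λ ≠ -1). -/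
theorem statement16 (A : Type*) [AddCommGroup A] [Module ℂ A]
    (hdim : Module.finrank ℂ A = 2)
    (circ : A →ₗ[ℂ] A →ₗ[ℂ] A)
    (hap₁ : ∀ x y z : A, circ x (circ y z) - circ y (circ x z) =
      circ (circ y x - circ x y) z)
    (hap₂ : ∀ x y z : A, circ (circ x y - circ y x) z + circ (circ y z - circ z y) x +
      circ (circ z x - circ x z) y = 0)
    (hnz : ∃ x y : A, circ x y ≠ 0) :
    (∃ i : APIdx, Iso1 (fun x y => circ x y) (tm (apAlg i))) ∧
    (∀ i j : APIdx, Iso1 (tm (apAlg i)) (tm (apAlg j)) → i = j) := by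
  have hμ : circ ≠ 0 := by
    rintro rfl
    simp at hnz
  obtain ⟨i, hi⟩ := exists_hasTable_apAlg hdim hap₁ hμ
  exact ⟨⟨i, iso1_tm_iff_hasTable.2 hi⟩, fun i j hij =>
    eq_of_hasTable_apAlg (hasTable_tmLin (apAlg i))
      ((iso1_tm_iff_hasTable (μ := tmLin (apAlg i))).1 hij)⟩
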